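/- Fix n ≥ 3. If the functor St(n,−) satisfies the dilation principle (for every commutative ring A, every non-nilpotent a ∈ A and every g ∈ St(n,A[X]) with (ev_{X=0})_*(g) = 1 and (λ_a)_*(g) = 1 ∈ St(n,A_a[X]), there exists m ≥ 0 with (ev_{X=a^mY})_*(g) = 1 ∈ St(n,A[Y])), then St(n,−) satisfies the local–global principle: for every commutative ring R and every g ∈ St(n,R[X]) with (ev_{X=0})_*(g) = 1 ∈ St(n,R), g = 1 if and only if (λ_M)_*(g) = 1 ∈ St(n,R_M[X]) for all maximal ideals M of R. -/

import Mathlib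

open scoped commutatorElement

/-- Generators of the Steinberg group: triples (i,j,r) with i ≠ j. -/
abbrev StGen (n : ℕ) (R : Type) : Type := {p : Fin n × Fin n // p.1 ≠ p.2} × R

/-- The Steinberg relations. -/
inductive StRels (n : ℕ) (R : Type) [CommRing R] : FreeGroup (StGen n R) → Prop
  | add (i j : Fin n) (hij : i ≠ j) (r s : R) :
      StRels n R (FreeGroup.of (⟨(i, j), hij⟩, r) * FreeGroup.of (⟨(i, j), hij⟩, s) *
        (FreeGroup.of (⟨(i, j), hij⟩, r + s))⁻¹)
  | commZero (i j h k : Fin n) (hij : i ≠ j) (hhk : h ≠ k) (hjh : j ≠ h) (hik : i ≠ k) (r s : R) :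
      StRels n R ⁅(FreeGroup.of (⟨(i, j), hij⟩, r) : FreeGroup (StGen n R)), FreeGroup.of (⟨(h, k), hhk⟩, s)⁆
  | commAdd (i j k : Fin n) (hij : i ≠ j) (hjk : j ≠ k) (hik : i ≠ k) (r s : R) :
      StRels n R (⁅(FreeGroup.of (⟨(i, j), hij⟩, r) : FreeGroup (StGen n R)), FreeGroup.of (⟨(j, k), hjk⟩, s)⁆ *
        (FreeGroup.of (⟨(i, k), hik⟩, r * s))⁻¹)

/-- The Steinberg group `St(n, R)`. -/
abbrev SteinbergGroup (n : ℕ) (R : Type) [CommRing R] : Type :=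
  PresentedGroup {w | StRels n R w}

/-- The generator `x_{ij}(r)` of the Steinberg group. -/
def stx (n : ℕ) (R : Type) [CommRing R] (i j : Fin n) (hij : i ≠ j) (r : R) :
    SteinbergGroup n R :=
  PresentedGroup.of (⟨(i, j), hij⟩, r)

/-- The dilation principle for the functor `St(n, -)`. -/
def DilationPrinciple (n : ℕ) : Prop :=
  ∀ (A : Type) [CommRing A] (a : A), ¬ IsNilpotent a →
  ∀ g : SteinbergGroup n (Polynomial A),
  ∀ (ev0 : SteinbergGroup n (Polynomial A) →* SteinbergGroup n A),
    (∀ (i j : Fin n) (hij : i ≠ j) (p : Polynomial A),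
      ev0 (stx n (Polynomial A) i j hij p) = stx n A i j hij (Polynomial.eval 0 p)) →
    ev0 g = 1 →
  ∀ (la : SteinbergGroup n (Polynomial A) →*
      SteinbergGroup n (Polynomial (Localization.Away a))),
    (∀ (i j : Fin n) (hij : i ≠ j) (p : Polynomial A),
      la (stx n (Polynomial A) i j hij p) =
        stx n (Polynomial (Localization.Away a)) i j hij
          (p.map (algebraMap A (Localization.Away a)))) →
    la g = 1 →
  ∃ m : ℕ, ∀ (ev : SteinbergGroup n (Polynomial A) →* SteinbergGroup n (Polynomial A)),
    (∀ (i j : Fin n) (hij : i ≠ j) (p : Polynomial A),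
      ev (stx n (Polynomial A) i j hij p) =
        stx n (Polynomial A) i j hij (p.comp (Polynomial.C (a ^ m) * Polynomial.X))) →
    ev g = 1

/-- The Quillen local-global principle for the functor `St(n, -)`. -/
def LocalGlobalPrinciple (n : ℕ) : Prop :=
  ∀ (R : Type) [CommRing R] (g : SteinbergGroup n (Polynomial R))
    (ev0 : SteinbergGroup n (Polynomial R) →* SteinbergGroup n R),
    (∀ (i j : Fin n) (hij : i ≠ j) (p : Polynomial R),
      ev0 (stx n (Polynomial R) i j hij p) = stx n R i j hij (Polynomial.eval 0 p)) →
    ev0 g = 1 →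
    (g = 1 ↔
      ∀ (M : Ideal R) [M.IsMaximal]
        (lM : SteinbergGroup n (Polynomial R) →*
          SteinbergGroup n (Polynomial (Localization.AtPrime M))),
        (∀ (i j : Fin n) (hij : i ≠ j) (p : Polynomial R),
          lM (stx n (Polynomial R) i j hij p) =
            stx n (Polynomial (Localization.AtPrime M)) i j hij
              (p.map (algebraMap R (Localization.AtPrime M)))) →
        lM g = 1)

/-!
Quillen's patching argument. Call `b : R` good for `g` if `g(X + bY) = g(X)` in `St(n, R[X][Y])`.
Good elements form an ideal, and if `1` is good then substituting `X = 0` gives `g(Y) = g(0) = 1`.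
Were the ideal proper, it would lie in a maximal ideal `M`. A derivation of `g = 1` in
`St(n, R_M[X])` involves only finitely many denominators, so `g` already dies after inverting some
`a ∉ M`; the dilation principle over `R[X]`, applied to `g(X + Y) g(X)⁻¹`, then makes a power of `a`
good, a contradiction.

The finitely many denominators are handled by reduced products: `R_M[X]` maps to the product of the
rings `R[X]_a` modulo equality for all sufficiently divisible `a ∉ M`, and `St(n, -)` of a reduced
product maps to the reduced product of the groups `St(n, -)`.
-/

section ReducedProduct

variable {ι : Type*} (F : Filter ι) (M : ι → Type*)

/-- The congruence on a product of magmas identifying families that agree eventually along the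
filter `F`; its quotient is the reduced product of the family along `F`. -/
def reducedProductCon [∀ i, Mul (M i)] : Con (∀ i, M i) where
  toSetoid := F.productSetoid M
  mul' hf hg := by filter_upwards [hf, hg] with i hfi hgi using congrArg₂ (· * ·) hfi hgi

/-- The ring version of `reducedProductCon`. -/
def reducedProductRingCon [∀ i, Add (M i)] [∀ i, Mul (M i)] : RingCon (∀ i, M i) where
  toCon := reducedProductCon F M
  add' hf hg := by filter_upwards [hf, hg] with i hfi hgi using congrArg₂ (· + ·) hfi hgi

variable {F M}

theorem reducedProductCon_coe_eq_coe [∀ i, Mul (M i)] {f g : ∀ i, M i} :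
    (f : (reducedProductCon F M).Quotient) = g ↔ ∀ᶠ i in F, f i = g i :=
  Con.eq _

theorem reducedProductRingCon_coe_eq_coe [∀ i, Add (M i)] [∀ i, Mul (M i)] {f g : ∀ i, M i} :
    (f : (reducedProductRingCon F M).Quotient) = g ↔ ∀ᶠ i in F, f i = g i :=
  RingCon.eq _

theorem isUnit_coe_reducedProductRingCon [∀ i, CommSemiring (M i)] {f : ∀ i, M i}
    (hf : ∀ᶠ i in F, IsUnit (f i)) : IsUnit (f : (reducedProductRingCon F M).Quotient) := by
  refine .of_mul_eq_one ((fun i => Ring.inverse (f i) : ∀ i, M i) : _) ?_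
  rw [← RingCon.coe_mul, ← RingCon.coe_one, reducedProductRingCon_coe_eq_coe]
  filter_upwards [hf] with i hi using Ring.mul_inverse_cancel _ hi

end ReducedProduct

section Divisibility

variable (N : Type*) [CommMonoid N]

/-- The filter of sets containing all multiples of some element, so that a property holds
eventually if it holds for all sufficiently divisible elements. -/
def divisibilityFilter : Filter N := ⨅ s : N, Filter.principal {c | s ∣ c}

variable {N}

theorem eventually_divisibilityFilter {P : N → Prop} :
    (∀ᶠ c in divisibilityFilter N, P c) ↔ ∃ s : N, ∀ c, s ∣ c → P c := by
  have hdir : Directed (· ≥ ·) fun s : N => {c | s ∣ c} := fun s t =>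
    ⟨s * t, fun _ => dvd_of_mul_right_dvd, fun _ => dvd_of_mul_left_dvd⟩
  simpa using! (Filter.hasBasis_iInf_principal hdir).eventually_iff

end Divisibility

section LocalizationReducedProduct

variable {A : Type*} [CommRing A]

theorem eventually_isUnit_algebraMap_away {N : Submonoid A} (s : N) :
    ∀ᶠ c : N in divisibilityFilter N, IsUnit (algebraMap A (Localization.Away (c : A)) s) :=
  eventually_divisibilityFilter.2 ⟨s, fun c hsc =>
    isUnit_of_dvd_unit (map_dvd (algebraMap A _) (map_dvd N.subtype hsc))
      (IsLocalization.Away.algebraMap_isUnit (c : A))⟩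

theorem exists_ringHom_reducedProduct_away (N : Submonoid A) (T : Type*) [CommRing T] [Algebra A T]
    [IsLocalization N T] :
    ∃ l : T →+* (reducedProductRingCon (divisibilityFilter N)
        fun c : N => Localization.Away (c : A)).Quotient,
      l.comp (algebraMap A T) =
        (RingCon.mk' _).comp (RingHom.pi fun c : N => algebraMap A (Localization.Away (c : A))) :=
  ⟨_, IsLocalization.lift_comp (M := N) fun s =>
    isUnit_coe_reducedProductRingCon (eventually_isUnit_algebraMap_away s)⟩

end LocalizationReducedProduct

section Translate

open Polynomial

variable {R : Type*} [CommSemiring R]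

/-- The substitution `X ↦ X + b Y`, where `Y` is the outer variable of `R[X][Y]`. -/
noncomputable def translateHom (b : R) : R[X] →+* R[X][X] :=
  eval₂RingHom (C.comp C) (C X + C (C b) * X)

theorem translateHom_C (b r : R) : translateHom b (C r) = C (C r) := by simp [translateHom]

theorem translateHom_X (b : R) : translateHom b X = C X + C (C b) * X := by simp [translateHom]

theorem translateHom_zero : translateHom (0 : R) = C := by
  ext <;> simp [translateHom]

theorem eval₂RingHom_translateHom_comp_translateHom (b c : R) :
    (eval₂RingHom (translateHom b) X).comp (translateHom c) = translateHom (b + c) := by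
  apply ringHom_ext
  · simp [translateHom_C]
  · simp [translateHom_X, translateHom_C, add_mul, add_assoc]

theorem compRingHom_comp_translateHom (r b : R) :
    (compRingHom (C (C r) * X)).comp (translateHom b) = translateHom (r * b) := by
  apply ringHom_ext
  · simp [translateHom_C]
  · simp [translateHom_X, mul_left_comm, mul_assoc]

theorem compRingHom_comp_C (p : R[X]) : (compRingHom p).comp C = C := by
  ext; simp

end Translate

namespace SteinbergGroup

variable {n : ℕ} {R S T : Type} [CommRing R] [CommRing S] [CommRing T]

theorem stx_mul_stx (i j : Fin n) (hij : i ≠ j) (r s : R) :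
    stx n R i j hij r * stx n R i j hij s = stx n R i j hij (r + s) :=
  mul_inv_eq_one.1 (PresentedGroup.one_of_mem (StRels.add i j hij r s))

theorem commutator_stx_stx_eq_one {i j h k : Fin n} (hij : i ≠ j) (hhk : h ≠ k) (hjh : j ≠ h)
    (hik : i ≠ k) (r s : R) : ⁅stx n R i j hij r, stx n R h k hhk s⁆ = 1 :=
  PresentedGroup.one_of_mem (StRels.commZero i j h k hij hhk hjh hik r s)

theorem commutator_stx_stx {i j k : Fin n} (hij : i ≠ j) (hjk : j ≠ k) (hik : i ≠ k) (r s : R) :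
    ⁅stx n R i j hij r, stx n R j k hjk s⁆ = stx n R i k hik (r * s) :=
  mul_inv_eq_one.1 (PresentedGroup.one_of_mem (StRels.commAdd i j k hij hjk hik r s))

section Lift

variable {G : Type*} [Group G]

/-- The universal property of `St(n, R)`: a family of elements of `G` satisfying the Steinberg
relations defines a homomorphism to `G`. -/
def lift (x : ∀ i j : Fin n, i ≠ j → R → G)
    (mul_eq : ∀ i j hij r s, x i j hij r * x i j hij s = x i j hij (r + s))
    (commutator_eq_one : ∀ i j h k hij hhk, j ≠ h → i ≠ k → ∀ r s,
      ⁅x i j hij r, x h k hhk s⁆ = 1)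
    (commutator_eq : ∀ i j k hij hjk hik r s,
      ⁅x i j hij r, x j k hjk s⁆ = x i k hik (r * s)) :
    SteinbergGroup n R →* G :=
  PresentedGroup.toGroup (f := fun p : StGen n R => x p.1.1.1 p.1.1.2 p.1.2 p.2) <| by
    rintro _ (⟨i, j, hij, r, s⟩ | ⟨i, j, h, k, hij, hhk, hjh, hik, r, s⟩ |
      ⟨i, j, k, hij, hjk, hik, r, s⟩)
    · simpa [mul_inv_eq_one] using mul_eq i j hij r s
    · simpa [map_commutatorElement] using commutator_eq_one i j h k hij hhk hjh hik r s
    · simpa [map_commutatorElement, mul_inv_eq_one] using commutator_eq i j k hij hjk hik r s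

theorem lift_stx (x : ∀ i j : Fin n, i ≠ j → R → G) (mul_eq commutator_eq_one commutator_eq)
    (i j : Fin n) (hij : i ≠ j) (r : R) :
    lift x mul_eq commutator_eq_one commutator_eq (stx n R i j hij r) = x i j hij r :=
  PresentedGroup.toGroup.of _

theorem hom_ext {φ ψ : SteinbergGroup n R →* G}
    (h : ∀ i j hij r, φ (stx n R i j hij r) = ψ (stx n R i j hij r)) : φ = ψ :=
  PresentedGroup.ext fun ⟨⟨⟨i, j⟩, hij⟩, r⟩ => h i j hij r

end Lift

variable (n) in
/-- The homomorphism `f_* : St(n, R) → St(n, S)` induced by a ring homomorphism `f : R → S`. -/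
def map (f : R →+* S) : SteinbergGroup n R →* SteinbergGroup n S :=
  lift (fun i j hij r => stx n S i j hij (f r))
    (fun i j hij r s => by rw [stx_mul_stx, map_add])
    (fun i j h k hij hhk hjh hik r s => commutator_stx_stx_eq_one hij hhk hjh hik _ _)
    (fun i j k hij hjk hik r s => by rw [commutator_stx_stx hij hjk hik, map_mul])

theorem map_stx (f : R →+* S) (i j : Fin n) (hij : i ≠ j) (r : R) :
    map n f (stx n R i j hij r) = stx n S i j hij (f r) :=
  lift_stx ..

theorem eq_map {f : R →+* S} {φ : SteinbergGroup n R →* SteinbergGroup n S}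
    (h : ∀ i j hij r, φ (stx n R i j hij r) = stx n S i j hij (f r)) : φ = map n f :=
  hom_ext fun i j hij r => by rw [h, map_stx]

theorem map_id (g : SteinbergGroup n R) : map n (RingHom.id R) g = g :=
  DFunLike.congr_fun (eq_map (φ := MonoidHom.id _) fun _ _ _ _ => rfl).symm g

theorem map_map (f : S →+* T) (f' : R →+* S) (g : SteinbergGroup n R) :
    map n f (map n f' g) = map n (f.comp f') g :=
  DFunLike.congr_fun (eq_map (φ := (map n f).comp (map n f'))
    fun i j hij r => by simp only [MonoidHom.comp_apply, map_stx, RingHom.comp_apply]) g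

section Localization

variable {ι : Type} (F : Filter ι) (B : ι → Type) [∀ c, CommRing (B c)]

variable (n) in
/-- The canonical homomorphism from the Steinberg group of a reduced product of rings to the
reduced product of their Steinberg groups. -/
def toReducedProduct : SteinbergGroup n (reducedProductRingCon F B).Quotient →*
    (reducedProductCon F fun c => SteinbergGroup n (B c)).Quotient :=
  lift
    (fun i j hij => Quotient.map (fun f c => stx n (B c) i j hij (f c)) fun _ _ hfg =>
      hfg.mono fun _ => congrArg _)
    (by
      rintro i j hij ⟨f⟩ ⟨g⟩
      exact congrArg _ (funext fun c => stx_mul_stx i j hij (f c) (g c)))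
    (by
      rintro i j h k hij hhk hjh hik ⟨f⟩ ⟨g⟩
      exact congrArg _ (funext fun c => commutator_stx_stx_eq_one hij hhk hjh hik (f c) (g c)))
    (by
      rintro i j k hij hjk hik ⟨f⟩ ⟨g⟩
      exact congrArg _ (funext fun c => commutator_stx_stx hij hjk hik (f c) (g c)))

variable {F B}

theorem toReducedProduct_stx (i j : Fin n) (hij : i ≠ j) (f : ∀ c, B c) :
    toReducedProduct n F B (stx n _ i j hij f) = ((fun c => stx n (B c) i j hij (f c) :
      ∀ c, SteinbergGroup n (B c)) : (reducedProductCon F _).Quotient) :=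
  lift_stx ..

theorem toReducedProduct_map_pi (φ : ∀ c, R →+* B c) (g : SteinbergGroup n R) :
    toReducedProduct n F B (map n ((RingCon.mk' _).comp (RingHom.pi φ)) g) =
      ((fun c => map n (φ c) g : ∀ c, SteinbergGroup n (B c)) :
        (reducedProductCon F _).Quotient) := by
  suffices (toReducedProduct n F B).comp (map n ((RingCon.mk' _).comp (RingHom.pi φ))) =
      (Con.mk' _).comp (MonoidHom.pi fun c => map n (φ c)) from DFunLike.congr_fun this g
  refine hom_ext fun i j hij r => ?_
  rw [MonoidHom.comp_apply, map_stx]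
  exact (toReducedProduct_stx ..).trans
    (congrArg _ (funext fun c => (map_stx (φ c) i j hij r).symm))

theorem exists_map_away_eq_one (N : Submonoid R) [Algebra R T] [IsLocalization N T]
    {g : SteinbergGroup n R} (hg : map n (algebraMap R T) g = 1) :
    ∃ c ∈ N, map n (algebraMap R (Localization.Away c)) g = 1 := by
  obtain ⟨l, hl⟩ := exists_ringHom_reducedProduct_away N T
  have hprod := toReducedProduct_map_pi (F := divisibilityFilter N)
    (fun c : N => algebraMap R (Localization.Away (c : R))) g
  rw [← hl, ← map_map, hg, map_one, map_one] at hprod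
  obtain ⟨s, hs⟩ := eventually_divisibilityFilter.1 (reducedProductCon_coe_eq_coe.1 hprod.symm)
  exact ⟨s, s.2, hs s dvd_rfl⟩

theorem map_eq_one_of_isUnit {a : R} {g : SteinbergGroup n R}
    (hg : map n (algebraMap R (Localization.Away a)) g = 1) {f : R →+* S} (hf : IsUnit (f a)) :
    map n f g = 1 := by
  rw [← IsLocalization.Away.lift_comp (S := Localization.Away a) a hf, ← map_map, hg, map_one]

end Localization

section QuillenIdeal

open Polynomial

/-- Quillen's ideal of the `b : R` with `g(X + bY) = g(X)` in `St(n, R[X][Y])`. -/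
def quillenIdeal (g : SteinbergGroup n R[X]) : Ideal R where
  carrier := {b | map n (translateHom b) g = map n C g}
  zero_mem' := congrArg (map n · g) translateHom_zero
  add_mem' := by
    intro b c (hb : map n (translateHom b) g = map n C g)
      (hc : map n (translateHom c) g = map n C g)
    calc map n (translateHom (b + c)) g
        = map n (eval₂RingHom (translateHom b) X) (map n (translateHom c) g) := by
          rw [map_map, eval₂RingHom_translateHom_comp_translateHom]
      _ = map n (translateHom b) g := by rw [hc, map_map, eval₂RingHom_comp_C]
      _ = map n C g := hb
  smul_mem' := by
    intro r b (hb : map n (translateHom b) g = map n C g)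
    calc map n (translateHom (r * b)) g
        = map n (compRingHom (C (C r) * X)) (map n (translateHom b) g) := by
          rw [map_map, compRingHom_comp_translateHom]
      _ = map n C g := by rw [hb, map_map, compRingHom_comp_C]

theorem mem_quillenIdeal {g : SteinbergGroup n R[X]} {b : R} :
    b ∈ quillenIdeal g ↔ map n (translateHom b) g = map n C g :=
  Iff.rfl

theorem eq_one_of_quillenIdeal_eq_top {g : SteinbergGroup n R[X]}
    (hg₀ : map n (evalRingHom 0) g = 1) (htop : quillenIdeal g = ⊤) : g = 1 := by
  have htranslate : map n (translateHom 1) g = map n C g :=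
    mem_quillenIdeal.1 ((Ideal.eq_top_iff_one _).1 htop)
  have hid : (mapRingHom (evalRingHom 0)).comp (translateHom 1) = RingHom.id R[X] := by
    apply ringHom_ext <;> simp [translateHom_C, translateHom_X]
  have hconst : (mapRingHom (evalRingHom (0 : R))).comp C = C.comp (evalRingHom 0) := by
    ext <;> simp
  calc g = map n (mapRingHom (evalRingHom 0)) (map n (translateHom 1) g) := by
        rw [map_map, hid, map_id]
    _ = map n C (map n (evalRingHom 0) g) := by rw [htranslate, map_map, hconst, map_map]
    _ = 1 := by rw [hg₀, map_one]

theorem exists_map_compRingHom_eq_one (h : DilationPrinciple n) {a : R} (ha : ¬IsNilpotent a)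
    {g : SteinbergGroup n R[X]} (hg₀ : map n (evalRingHom 0) g = 1)
    (hga : map n (mapRingHom (algebraMap R (Localization.Away a))) g = 1) :
    ∃ m : ℕ, map n (compRingHom (C (a ^ m) * X)) g = 1 := by
  obtain ⟨m, hm⟩ := h R a ha g _ (map_stx _) hg₀ _ (map_stx _) hga
  exact ⟨m, hm _ (map_stx _)⟩

theorem exists_pow_mem_quillenIdeal (h : DilationPrinciple n) {a : R} {g : SteinbergGroup n R[X]}
    (hga : map n (algebraMap R[X] (Localization.Away (C a))) g = 1) :
    ∃ m : ℕ, a ^ m ∈ quillenIdeal g := by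
  by_cases ha : IsNilpotent a
  · obtain ⟨m, hm⟩ := ha
    exact ⟨m, hm ▸ zero_mem _⟩
  let d : SteinbergGroup n R[X][X] := map n (translateHom 1) g * (map n C g)⁻¹
  have hd₀ : map n (evalRingHom 0) d = 1 := by
    have heval : (evalRingHom 0).comp (translateHom 1) = (evalRingHom (0 : R[X])).comp C := by
      ext <;> simp [translateHom]
    rw [map_mul, map_inv, mul_inv_eq_one, map_map, map_map, heval]
  have hda : map n (mapRingHom (algebraMap R[X] (Localization.Away (C a)))) d = 1 := by
    have hunit := (IsLocalization.Away.algebraMap_isUnit (S := Localization.Away (C a)) (C a)).map C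
    rw [map_mul, map_inv, map_map, map_map, map_eq_one_of_isUnit hga, map_eq_one_of_isUnit hga,
      inv_one, mul_one]
    · simpa using hunit
    · simpa [translateHom_C] using hunit
  obtain ⟨m, hm⟩ := exists_map_compRingHom_eq_one h (isNilpotent_C_iff.not.2 ha) hd₀ hda
  rw [map_mul, map_inv, mul_inv_eq_one, map_map, map_map, compRingHom_comp_C, ← C_pow,
    compRingHom_comp_translateHom, mul_one] at hm
  exact ⟨m, mem_quillenIdeal.2 hm⟩

attribute [local instance] Polynomial.algebra Polynomial.isLocalization in
theorem quillenIdeal_not_le (h : DilationPrinciple n) (M : Ideal R) [M.IsPrime]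
    {g : SteinbergGroup n R[X]}
    (hg : map n (mapRingHom (algebraMap R (Localization.AtPrime M))) g = 1) :
    ¬quillenIdeal g ≤ M := by
  obtain ⟨_, ⟨a, haM, rfl⟩, hga⟩ := exists_map_away_eq_one (M.primeCompl.map C) hg
  obtain ⟨m, hm⟩ := exists_pow_mem_quillenIdeal h hga
  exact fun hle => haM (Ideal.IsPrime.mem_of_pow_mem ‹_› m (hle hm))

theorem eq_one_of_forall_isMaximal (h : DilationPrinciple n) {g : SteinbergGroup n R[X]}
    (hg₀ : map n (evalRingHom 0) g = 1)
    (hg : ∀ (M : Ideal R) [M.IsMaximal],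
      map n (mapRingHom (algebraMap R (Localization.AtPrime M))) g = 1) : g = 1 := by
  refine eq_one_of_quillenIdeal_eq_top hg₀ (by_contra fun hne => ?_)
  obtain ⟨M, hM, hle⟩ := Ideal.exists_le_maximal _ hne
  exact quillenIdeal_not_le h M (hg M) hle

end QuillenIdeal

end SteinbergGroup

open Polynomial in
theorem stmt3_general (n : ℕ) (h : DilationPrinciple n) : LocalGlobalPrinciple n := by
  intro R _ g ev₀ hev₀ hg₀
  refine ⟨fun hg _ _ _ _ => by rw [hg, map_one], fun hg => ?_⟩
  have hev₀_eq : ev₀ = SteinbergGroup.map n (evalRingHom 0) := SteinbergGroup.eq_map hev₀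
  exact SteinbergGroup.eq_one_of_forall_isMaximal h (hev₀_eq ▸ hg₀)
    fun M _ => hg M _ (SteinbergGroup.map_stx _)

theorem stmt3 (n : ℕ) (hn : 3 ≤ n) (h : DilationPrinciple n) : LocalGlobalPrinciple n :=
  stmt3_general n h
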